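/- arXiv:1609.04271 — 2 statements merged into one kernel-verified Lean document; each statement's English description precedes it below -/
import Mathlib

section
/- F' = π_F(Ω) is a countable dense subset of F, and every point of F' has a unique coding: for every u ∈ Ω, if v ∈ {1,…,5}^ℕ satisfies π_F(v) = π_F(u), then v = u. -/
/-!
Every point coded by a sequence ending in `4^∞` is *triadic*: both coordinates lie in `ℤ[1/3]`,
because `4^∞` codes `0`. There are countably many triadic points.

The set `F` lies in the unit square. A point of `F` on the edge `re = 1` can only have first
digit `2 + i`, with the rest of its expansion again on that edge, so its imaginary part is `1/2`;
likewise the only point of `F` with `im = 1` has real part `1/2`. Since `1/2 ∉ ℤ[1/3]`, a triadic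
point of `F` lies in `[0,1)²`. If `q` is triadic and `3q = z + e_j = z' + e_k` with `z, z' ∈ F`,
then `z, z'` are triadic, hence in `[0,1)²`, and taking integer parts of the coordinates gives
`j = k` (`digit_unique`). Induction gives uniqueness of the coding.

Density follows from `0 ∈ F'`, the invariance of `F'` under each `φ_j`, and the fact that each
`φ_j` contracts distances by the factor `1/3`.
-/

open MeasureTheory

noncomputable section

/-- The alphabet `{1,…,5}`, encoded as `Fin 5` (letter `k` is index `k-1`). -/
abbrev Letter := Fin 5

/-- The letter `1`. -/
def l1 : Letter := 0
/-- The letter `2`. -/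
def l2 : Letter := 1
/-- The letter `3`. -/
def l3 : Letter := 2
/-- The letter `4`. -/
def l4 : Letter := 3
/-- The letter `5`. -/
def l5 : Letter := 4

/-- The digit set of `E`: `(d_1,…,d_5) = (0, 1, 2, 2+i, 1+2i)`. -/
def dE : Letter → ℂ := ![0, 1, 2, 2 + Complex.I, 1 + 2 * Complex.I]

/-- The digit set of `F`: `(e_1,…,e_5) = (1+2i, 1+i, 1, 0, 2+i)`. -/
def dF : Letter → ℂ := ![1 + 2 * Complex.I, 1 + Complex.I, 1, 0, 2 + Complex.I]

/-- The map `φ^E_j(z) = (z + d_j)/3`. -/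
def phiE (j : Letter) (z : ℂ) : ℂ := (z + dE j) / 3

/-- The map `φ^F_j(z) = (z + e_j)/3`. -/
def phiF (j : Letter) (z : ℂ) : ℂ := (z + dF j) / 3

/-- For a finite word `w = w_1⋯w_n`, the composition `φ_{w_1} ∘ ⋯ ∘ φ_{w_n}`
(the empty word gives the identity). -/
def iterPhi (φ : Letter → ℂ → ℂ) : List Letter → ℂ → ℂ
  | [] => id
  | j :: w => φ j ∘ iterPhi φ w

/-- `K` is the attractor of the IFS `{φ_j}`: the (unique) nonempty compact set with
`K = ⋃_j φ_j(K)`. -/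
def IsAttractor (φ : Letter → ℂ → ℂ) (K : Set ℂ) : Prop :=
  K.Nonempty ∧ IsCompact K ∧ K = ⋃ j, φ j '' K

/-- The prefix `x_1⋯x_n` of the sequence `x`. -/
def preWord (x : ℕ → Letter) (n : ℕ) : List Letter := List.ofFn fun i : Fin n => x i

/-- The factor `x_{j+1}⋯x_{j+L}` of `x` (`j` entries skipped, length `L`). -/
def fword (x : ℕ → Letter) (j L : ℕ) : List Letter := List.ofFn fun i : Fin L => x (j + i)

/-- `p = π_K(x)`, i.e. `p` is the point of `⋂_{n≥1} φ_{x_1⋯x_n}(K)`. -/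
def codes (φ : Letter → ℂ → ℂ) (K : Set ℂ) (x : ℕ → Letter) (p : ℂ) : Prop :=
  ∀ n, p ∈ iterPhi φ (preWord x n) '' K

/-- `Ω`: the sequences that are eventually constant equal to the letter `4`. -/
def OmegaSeq : Set (ℕ → Letter) := {x | ∃ N, ∀ n, N ≤ n → x n = l4}

/-- `Λ(x,y) = n`: the separation number of `(x,y)` for the IFS `φ` with attractor `K`
is `n`, i.e. `n` is the largest integer with `φ_{x_1⋯x_n}(K) ∩ φ_{y_1⋯y_n}(K) ≠ ∅`. -/
def SepNum (φ : Letter → ℂ → ℂ) (K : Set ℂ) (x y : ℕ → Letter) (n : ℕ) : Prop :=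
  (iterPhi φ (preWord x n) '' K ∩ iterPhi φ (preWord y n) '' K).Nonempty ∧
    ∀ m, n < m → iterPhi φ (preWord x m) '' K ∩ iterPhi φ (preWord y m) '' K = ∅

/-- The factor of `x` starting at position `j` (0-indexed) of length `L` is an
`E`-special segment: either `35^k` followed by a letter `≠ 5` (so `L = k+1`, `k ≥ 1`),
or `42^{k-1}5` (so `L = k+1`, `k ≥ 1`). -/
def ESpecial (x : ℕ → Letter) (j L : ℕ) : Prop :=
  (2 ≤ L ∧ x j = l3 ∧ (∀ i, 1 ≤ i → i < L → x (j + i) = l5) ∧ x (j + L) ≠ l5) ∨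
  (2 ≤ L ∧ x j = l4 ∧ (∀ i, 1 ≤ i → i < L - 1 → x (j + i) = l2) ∧ x (j + L - 1) = l5)

/-- The entry of `x` at position `j` is an `E`-plain segment: it belongs to no
`E`-special segment of `x`. -/
def EPlain (x : ℕ → Letter) (j : ℕ) : Prop :=
  ∀ p L, ESpecial x p L → ¬(p ≤ j ∧ j < p + L)

/-- An `E`-segment: an `E`-special segment, or a single `E`-plain entry. -/
def ESegment (x : ℕ → Letter) (j L : ℕ) : Prop :=
  ESpecial x j L ∨ (L = 1 ∧ EPlain x j)

/-- The factor of `u` starting at position `j` of length `L` is an `F`-special segment: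
`42^m5` followed by a letter `≠ 5` (`L = m+2`, `m ≥ 0`), or `42^m55` (`L = m+3`, `m ≥ 0`),
or `35` (`L = 2`). -/
def FSpecial (u : ℕ → Letter) (j L : ℕ) : Prop :=
  (2 ≤ L ∧ u j = l4 ∧ (∀ i, 1 ≤ i → i < L - 1 → u (j + i) = l2) ∧
    u (j + L - 1) = l5 ∧ u (j + L) ≠ l5) ∨
  (3 ≤ L ∧ u j = l4 ∧ (∀ i, 1 ≤ i → i < L - 2 → u (j + i) = l2) ∧
    u (j + L - 2) = l5 ∧ u (j + L - 1) = l5) ∨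
  (L = 2 ∧ u j = l3 ∧ u (j + 1) = l5)

/-- The entry of `u` at position `j` is an `F`-plain segment. -/
def FPlain (u : ℕ → Letter) (j : ℕ) : Prop :=
  ∀ p L, FSpecial u p L → ¬(p ≤ j ∧ j < p + L)

/-- An `F`-segment: an `F`-special segment, or a single `F`-plain entry. -/
def FSegment (u : ℕ → Letter) (j L : ℕ) : Prop :=
  FSpecial u j L ∨ (L = 1 ∧ FPlain u j)

/-- `b` enumerates the starting positions of a factorization of `x` into consecutive
segments: `b 0 = 0` and for each `j`, the factor occupying positions `[b j, b (j+1))`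
is a segment (in the sense of `Seg`). -/
def SegDecomp (Seg : (ℕ → Letter) → ℕ → ℕ → Prop) (x : ℕ → Letter) (b : ℕ → ℕ) : Prop :=
  b 0 = 0 ∧ ∀ j, Seg x (b j) (b (j + 1) - b j)

/-- The word map `g₀`: `35^k ↦ 42^{k-1}5`, `42^k5 ↦ 42^{k-1}55` (`k ≥ 1`), `45 ↦ 35`,
and `a ↦ a` for single letters.  (All these maps preserve length.) -/
def g0 (w : List Letter) : List Letter :=
  if w.length ≤ 1 then w
  else if w = [l4, l5] then [l3, l5]
  else if w.headI = l3 then l4 :: (List.replicate (w.length - 2) l2 ++ [l5])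
  else l4 :: (List.replicate (w.length - 3) l2 ++ [l5, l5])

/-- `u = g(x)`: for some `E`-segment decomposition `x = X₁X₂⋯` (with starting positions
`b`), the sequence `u` is `g₀(X₁)g₀(X₂)⋯`, each `g₀(X_j)` occupying the positions
of `X_j` (note that `g₀` preserves lengths). -/
def gRel (x u : ℕ → Letter) : Prop :=
  ∃ b : ℕ → ℕ, SegDecomp ESegment x b ∧
    ∀ j, fword u (b j) (b (j + 1) - b j) = g0 (fword x (b j) (b (j + 1) - b j))

/-- `E' = π_E(Ω)`. -/
def Eset' (E : Set ℂ) : Set ℂ := {p | ∃ x ∈ OmegaSeq, codes phiE E x p}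

/-- `F' = π_F(Ω)`. -/
def Fset' (F : Set ℂ) : Set ℂ := {q | ∃ u ∈ OmegaSeq, codes phiF F u q}

/-- The dimension `s = log 5 / log 3`. -/
def sDim : ℝ := Real.log 5 / Real.log 3

end

/-! ### Digits, triadic points and the unit square -/

/-- Points of `ℂ` whose two coordinates are triadic rationals. -/
def Triadic (q : ℂ) : Prop :=
  ∃ (N : ℕ) (a b : ℤ), 3 ^ N * q.re = a ∧ 3 ^ N * q.im = b

lemma phiF_re (j : Letter) (z : ℂ) : 3 * (phiF j z).re = z.re + (dF j).re := by
  have h : (3 : ℂ) * phiF j z = z + dF j := by unfold phiF; ring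
  simpa using congrArg Complex.re h

lemma phiF_im (j : Letter) (z : ℂ) : 3 * (phiF j z).im = z.im + (dF j).im := by
  have h : (3 : ℂ) * phiF j z = z + dF j := by unfold phiF; ring
  simpa using congrArg Complex.im h

lemma phiF_inj (j : Letter) : Function.Injective (phiF j) := by
  intro a b h
  unfold phiF at h
  have := congrArg (fun x => 3 * x - dF j) h
  ring_nf at this
  exact this

/-- The digits of `F` are Gaussian integers `a + b i` with `0 ≤ a, b ≤ 2`; the only digit with
`a = 2` has `b = 1`, and the only digit with `b = 2` has `a = 1`. -/
lemma dF_int (j : Letter) : ∃ a b : ℤ, (dF j).re = a ∧ (dF j).im = b ∧ 0 ≤ a ∧ a ≤ 2 ∧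
    0 ≤ b ∧ b ≤ 2 ∧ (a = 2 → b = 1) ∧ (b = 2 → a = 1) := by
  fin_cases j
  · exact ⟨1, 2, by simp [dF]⟩
  · exact ⟨1, 1, by simp [dF]⟩
  · exact ⟨1, 0, by simp [dF]⟩
  · exact ⟨0, 0, by simp [dF]⟩
  · exact ⟨2, 1, by simp [dF]⟩

lemma dF_inj : Function.Injective dF := by
  intro j k h
  have hr := congrArg Complex.re h
  have hi := congrArg Complex.im h
  fin_cases j <;> fin_cases k <;> simp [dF] at hr hi ⊢

lemma eq_zero_of_le_pow {x C : ℝ} (h : ∀ n : ℕ, |x| ≤ C * (1 / 3) ^ n) : x = 0 := by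
  have ht : Filter.Tendsto (fun n : ℕ => C * (1 / 3 : ℝ) ^ n) Filter.atTop (nhds (C * 0)) :=
    (tendsto_pow_atTop_nhds_zero_of_lt_one (by norm_num) (by norm_num)).const_mul C
  have := ge_of_tendsto' ht h
  simp only [mul_zero] at this
  exact abs_eq_zero.1 (le_antisymm this (abs_nonneg x))

section

variable {F : Set ℂ}

lemma mem_phi (hF : IsAttractor phiF F) {z : ℂ} (hz : z ∈ F) : ∃ j, ∃ z' ∈ F, phiF j z' = z := by
  rw [hF.2.2] at hz
  simpa using hz

lemma phi_mem (hF : IsAttractor phiF F) (j : Letter) {z : ℂ} (hz : z ∈ F) : phiF j z ∈ F := by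
  rw [hF.2.2]
  exact Set.mem_iUnion.2 ⟨j, z, hz, rfl⟩

lemma F_box (hF : IsAttractor phiF F) {z : ℂ} (hz : z ∈ F) :
    0 ≤ z.re ∧ z.re ≤ 1 ∧ 0 ≤ z.im ∧ z.im ≤ 1 := by
  -- At an extremal point `m` of a coordinate, `3m = m' + e` with `m'` no more extremal than `m`.
  obtain ⟨a, ha, ha'⟩ := hF.2.1.exists_isMinOn hF.1 Complex.continuous_re.continuousOn
  obtain ⟨b, hb, hb'⟩ := hF.2.1.exists_isMaxOn hF.1 Complex.continuous_re.continuousOn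
  obtain ⟨c, hc, hc'⟩ := hF.2.1.exists_isMinOn hF.1 Complex.continuous_im.continuousOn
  obtain ⟨d, hd, hd'⟩ := hF.2.1.exists_isMaxOn hF.1 Complex.continuous_im.continuousOn
  rw [isMinOn_iff] at ha' hc'
  rw [isMaxOn_iff] at hb' hd'
  have key : ∀ w ∈ F, ∃ w' ∈ F, w'.re ≤ 3 * w.re ∧ 3 * w.re ≤ w'.re + 2 ∧
      w'.im ≤ 3 * w.im ∧ 3 * w.im ≤ w'.im + 2 := by
    intro w hw
    obtain ⟨j, w', hw', rfl⟩ := mem_phi hF hw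
    obtain ⟨p, q, hp, hq, h1, h2, h3, h4, -, -⟩ := dF_int j
    have e1 : (0 : ℝ) ≤ p := by exact_mod_cast h1
    have e2 : (p : ℝ) ≤ 2 := by exact_mod_cast h2
    have e3 : (0 : ℝ) ≤ q := by exact_mod_cast h3
    have e4 : (q : ℝ) ≤ 2 := by exact_mod_cast h4
    refine ⟨w', hw', ?_⟩
    rw [phiF_re, phiF_im, hp, hq]
    refine ⟨?_, ?_, ?_, ?_⟩ <;> linarith
  refine ⟨?_, ?_, ?_, ?_⟩
  · obtain ⟨w, hw, h1, h2, h3, h4⟩ := key a ha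
    linarith [ha' z hz, ha' w hw]
  · obtain ⟨w, hw, h1, h2, h3, h4⟩ := key b hb
    linarith [hb' z hz, hb' w hw]
  · obtain ⟨w, hw, h1, h2, h3, h4⟩ := key c hc
    linarith [hc' z hz, hc' w hw]
  · obtain ⟨w, hw, h1, h2, h3, h4⟩ := key d hd
    linarith [hd' z hz, hd' w hw]

lemma edge_re (hF : IsAttractor phiF F) {z : ℂ} (hz : z ∈ F) (h : z.re = 1) : z.im = 1 / 2 := by
  have key : ∀ n : ℕ, ∀ z ∈ F, z.re = 1 → |z.im - 1 / 2| ≤ 1 * (1 / 3) ^ n := by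
    intro n
    induction n with
    | zero =>
      intro z hz _
      have := F_box hF hz
      rw [abs_le]
      constructor <;> norm_num <;> linarith
    | succ n ih =>
      intro z hz h
      obtain ⟨j, w, hw, rfl⟩ := mem_phi hF hz
      obtain ⟨p, q, hp, hq, -, h2, -, -, h5, -⟩ := dF_int j
      have h6 := phiF_re j w
      have h7 := phiF_im j w
      have hb := F_box hF hw
      rw [h, hp] at h6
      have e : (2 : ℝ) ≤ p := by linarith
      have e' : p = 2 := le_antisymm h2 (by exact_mod_cast e)
      have e2 := h5 e'
      subst e' e2
      push_cast at h6 hq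
      have := ih w hw (by linarith)
      rw [hq] at h7
      rw [abs_le] at this ⊢
      rw [pow_succ]
      constructor <;> linarith
  linarith [eq_zero_of_le_pow fun n => key n z hz h]

lemma edge_im (hF : IsAttractor phiF F) {z : ℂ} (hz : z ∈ F) (h : z.im = 1) : z.re = 1 / 2 := by
  have key : ∀ n : ℕ, ∀ z ∈ F, z.im = 1 → |z.re - 1 / 2| ≤ 1 * (1 / 3) ^ n := by
    intro n
    induction n with
    | zero =>
      intro z hz _
      have := F_box hF hz
      rw [abs_le]
      constructor <;> norm_num <;> linarith
    | succ n ih =>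
      intro z hz h
      obtain ⟨j, w, hw, rfl⟩ := mem_phi hF hz
      obtain ⟨p, q, hp, hq, -, -, -, h4, -, h5⟩ := dF_int j
      have h6 := phiF_im j w
      have h7 := phiF_re j w
      have hb := F_box hF hw
      rw [h, hq] at h6
      have e : (2 : ℝ) ≤ q := by linarith
      have e' : q = 2 := le_antisymm h4 (by exact_mod_cast e)
      have e2 := h5 e'
      subst e' e2
      push_cast at h6 hp
      have := ih w hw (by linarith)
      rw [hp] at h7
      rw [abs_le] at this ⊢
      rw [pow_succ]
      constructor <;> linarith
  linarith [eq_zero_of_le_pow fun n => key n z hz h]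

lemma half_not_triadic {N : ℕ} {a : ℤ} (h : (3 : ℝ) ^ N * (1 / 2) = a) : False := by
  have h2 : (3 : ℝ) ^ N = 2 * a := by linarith
  have h3 : (3 : ℤ) ^ N = 2 * a := by exact_mod_cast h2
  have ho : Odd ((3 : ℤ) ^ N) := Odd.pow (by decide)
  rw [h3] at ho
  exact (Int.not_odd_iff_even.2 (even_two_mul a)) ho

lemma triadic_box (hF : IsAttractor phiF F) {z : ℂ} (hz : z ∈ F) (ht : Triadic z) :
    0 ≤ z.re ∧ z.re < 1 ∧ 0 ≤ z.im ∧ z.im < 1 := by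
  obtain ⟨h1, h2, h3, h4⟩ := F_box hF hz
  obtain ⟨N, a, b, ha, hb⟩ := ht
  refine ⟨h1, lt_of_le_of_ne h2 fun h => ?_, h3, lt_of_le_of_ne h4 fun h => ?_⟩
  · rw [edge_re hF hz h] at hb
    exact half_not_triadic hb
  · rw [edge_im hF hz h] at ha
    exact half_not_triadic ha

lemma triadic_of_phi {j : Letter} {z : ℂ} (h : Triadic (phiF j z)) : Triadic z := by
  obtain ⟨N, a, b, ha, hb⟩ := h
  obtain ⟨p, q, hp, hq, -⟩ := dF_int j
  have h1 := phiF_re j z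
  have h2 := phiF_im j z
  refine ⟨N, 3 * a - 3 ^ N * p, 3 * b - 3 ^ N * q, ?_, ?_⟩
  · push_cast
    rw [← ha, ← hp]
    linear_combination (-(3 : ℝ) ^ N) * h1
  · push_cast
    rw [← hb, ← hq]
    linear_combination (-(3 : ℝ) ^ N) * h2

lemma Triadic.phi (j : Letter) {z : ℂ} (h : Triadic z) : Triadic (phiF j z) := by
  obtain ⟨N, a, b, ha, hb⟩ := h
  obtain ⟨p, q, hp, hq, -⟩ := dF_int j
  have h1 := phiF_re j z
  have h2 := phiF_im j z
  refine ⟨N + 1, a + 3 ^ N * p, b + 3 ^ N * q, ?_, ?_⟩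
  · push_cast
    rw [← ha, ← hp]
    linear_combination ((3 : ℝ) ^ N) * h1
  · push_cast
    rw [← hb, ← hq]
    linear_combination ((3 : ℝ) ^ N) * h2

lemma triadic_countable : {q | Triadic q}.Countable := by
  refine (Set.countable_range
    (fun t : ℕ × ℤ × ℤ => (⟨t.2.1 / 3 ^ t.1, t.2.2 / 3 ^ t.1⟩ : ℂ))).mono ?_
  rintro q ⟨N, a, b, ha, hb⟩
  refine ⟨(N, a, b), ?_⟩
  apply Complex.ext
  · simp only [← ha]; field_simp
  · simp only [← hb]; field_simp

lemma digit_unique (hF : IsAttractor phiF F) {j k : Letter} {z w : ℂ} (hz : z ∈ F) (hw : w ∈ F)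
    (ht : Triadic (phiF j z)) (h : phiF j z = phiF k w) : j = k := by
  obtain ⟨a1, a2, a3, a4⟩ := triadic_box hF hz (triadic_of_phi ht)
  obtain ⟨b1, b2, b3, b4⟩ := triadic_box hF hw (triadic_of_phi (h ▸ ht))
  have r1 := phiF_re j z
  have r2 := phiF_re k w
  have i1 := phiF_im j z
  have i2 := phiF_im k w
  rw [h] at r1 i1
  obtain ⟨p, q, hp, hq, -⟩ := dF_int j
  obtain ⟨p', q', hp', hq', -⟩ := dF_int k
  have int_eq : ∀ m n : ℤ, (m : ℝ) < n + 1 → (n : ℝ) < m + 1 → m = n := by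
    intro m n h1 h2
    have h1' : m < n + 1 := by exact_mod_cast h1
    have h2' : n < m + 1 := by exact_mod_cast h2
    omega
  rw [hp] at r1
  rw [hp'] at r2
  rw [hq] at i1
  rw [hq'] at i2
  have e1 : p = p' := int_eq _ _ (by linarith) (by linarith)
  have e2 : q = q' := int_eq _ _ (by linarith) (by linarith)
  apply dF_inj
  apply Complex.ext
  · rw [hp, hp', e1]
  · rw [hq, hq', e2]

/-! ### Codings and the shift -/

lemma preWord_succ (x : ℕ → Letter) (n : ℕ) :
    preWord x (n + 1) = x 0 :: preWord (fun m => x (m + 1)) n := by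
  simp [preWord, List.ofFn_succ]

lemma codes_mem {u : ℕ → Letter} {q : ℂ} (h : codes phiF F u q) : q ∈ F := by
  simpa [preWord, iterPhi] using h 0

lemma codes_tail {u : ℕ → Letter} {q : ℂ} (h : codes phiF F u q) :
    ∃ z, q = phiF (u 0) z ∧ codes phiF F (fun m => u (m + 1)) z := by
  obtain ⟨y, hy, hq⟩ := h 1
  rw [preWord_succ] at hq
  refine ⟨_, hq.symm, fun n => ?_⟩
  obtain ⟨y', hy', hq'⟩ := h (n + 1)
  rw [preWord_succ] at hq'
  exact ⟨y', hy', phiF_inj _ (hq'.trans hq.symm)⟩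

lemma codes_cons (hF : IsAttractor phiF F) {u : ℕ → Letter} {z : ℂ}
    (h : codes phiF F (fun m => u (m + 1)) z) : codes phiF F u (phiF (u 0) z) := by
  intro n
  cases n with
  | zero => simpa [preWord, iterPhi] using phi_mem hF (u 0) (codes_mem h)
  | succ n =>
    obtain ⟨y, hy, hz⟩ := h n
    rw [preWord_succ]
    exact ⟨y, hy, by simp [iterPhi, hz]⟩

lemma codes_const_four (hF : IsAttractor phiF F) {u : ℕ → Letter} {q : ℂ} (hu : ∀ n, u n = l4)
    (h : codes phiF F u q) : q = 0 := by
  have hd : dF l4 = 0 := by simp [dF, l4]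
  have key : ∀ n : ℕ, ∀ q, codes phiF F u q →
      |q.re| ≤ 1 * (1 / 3) ^ n ∧ |q.im| ≤ 1 * (1 / 3) ^ n := by
    intro n
    induction n with
    | zero =>
      intro q h
      obtain ⟨h1, h2, h3, h4⟩ := F_box hF (codes_mem h)
      rw [abs_of_nonneg h1, abs_of_nonneg h3]
      simp [h2, h4]
    | succ n ih =>
      intro q h
      obtain ⟨z, rfl, hz⟩ := codes_tail h
      have hs : (fun m => u (m + 1)) = u := by funext m; rw [hu, hu]
      rw [hs] at hz
      have := ih z hz
      have h1 := phiF_re (u 0) z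
      have h2 := phiF_im (u 0) z
      rw [hu, hd] at h1 h2
      simp only [Complex.zero_re, Complex.zero_im] at h1 h2
      rw [hu]
      rw [abs_le, abs_le] at this ⊢
      rw [pow_succ]
      refine ⟨⟨?_, ?_⟩, ?_, ?_⟩ <;> linarith [this.1.1, this.1.2, this.2.1, this.2.2]
  apply Complex.ext
  · exact eq_zero_of_le_pow fun n => (key n q h).1
  · exact eq_zero_of_le_pow fun n => (key n q h).2

lemma omega_triadic (hF : IsAttractor phiF F) {u : ℕ → Letter} {q : ℂ} (hu : u ∈ OmegaSeq)
    (h : codes phiF F u q) : Triadic q := by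
  obtain ⟨N, hN⟩ := hu
  induction N generalizing u q with
  | zero =>
    rw [codes_const_four hF (fun n => hN n (Nat.zero_le n)) h]
    exact ⟨0, 0, 0, by simp, by simp⟩
  | succ N ih =>
    obtain ⟨z, rfl, hz⟩ := codes_tail h
    exact (ih hz fun n hn => hN (n + 1) (by omega)).phi _

lemma coding_unique (hF : IsAttractor phiF F) {u v : ℕ → Letter} {q : ℂ} (ht : Triadic q)
    (hu : codes phiF F u q) (hv : codes phiF F v q) : v = u := by
  have key : ∀ n : ℕ, ∀ (u v : ℕ → Letter) (q : ℂ), Triadic q → codes phiF F u q →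
      codes phiF F v q → v n = u n := by
    intro n
    induction n with
    | zero =>
      intro u v q ht hu hv
      obtain ⟨z, rfl, hz⟩ := codes_tail hu
      obtain ⟨w, hw', hw⟩ := codes_tail hv
      exact (digit_unique hF (codes_mem hz) (codes_mem hw) ht hw').symm
    | succ n ih =>
      intro u v q ht hu hv
      obtain ⟨z, rfl, hz⟩ := codes_tail hu
      obtain ⟨w, hw', hw⟩ := codes_tail hv
      have e := digit_unique hF (codes_mem hz) (codes_mem hw) ht hw'
      rw [← e] at hw'
      rw [← phiF_inj _ hw'] at hw
      exact ih _ _ z (triadic_of_phi ht) hz hw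
  exact funext fun n => key n u v q ht hu hv

/-! ### Density -/

lemma dist_phiF (j : Letter) (z w : ℂ) : dist (phiF j z) (phiF j w) = dist z w / 3 := by
  rw [dist_eq_norm, dist_eq_norm]
  have : phiF j z - phiF j w = (z - w) / 3 := by unfold phiF; ring
  rw [this, norm_div]
  simp

lemma zero_mem (hF : IsAttractor phiF F) : (0 : ℂ) ∈ F := by
  -- `0` is the limit of the orbit of any point of `F` under `φ_4 : z ↦ z / 3`.
  obtain ⟨z, hz⟩ := hF.1
  have hd : dF l4 = 0 := by simp [dF, l4]
  have hm : ∀ n : ℕ, z * (1 / 3) ^ n ∈ F := by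
    intro n
    induction n with
    | zero => simpa using hz
    | succ n ih =>
      have := phi_mem hF l4 ih
      rw [phiF, hd] at this
      convert this using 1
      ring
  have ht : Filter.Tendsto (fun n : ℕ => z * (1 / 3 : ℂ) ^ n) Filter.atTop (nhds (z * 0)) :=
    (tendsto_pow_atTop_nhds_zero_of_norm_lt_one (by norm_num)).const_mul z
  rw [mul_zero] at ht
  exact hF.2.1.isClosed.mem_of_tendsto ht (Filter.Eventually.of_forall hm)

lemma zero_mem_Fset' (hF : IsAttractor phiF F) : (0 : ℂ) ∈ Fset' F := by
  have hd : phiF l4 0 = 0 := by simp [phiF, dF, l4]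
  refine ⟨fun _ => l4, ⟨0, fun _ _ => rfl⟩, fun n => ⟨0, zero_mem hF, ?_⟩⟩
  induction n with
  | zero => simp [preWord, iterPhi]
  | succ n ih => rw [preWord_succ]; simp [iterPhi, ih, hd]

lemma phi_mem_Fset' (hF : IsAttractor phiF F) (j : Letter) {p : ℂ} (hp : p ∈ Fset' F) :
    phiF j p ∈ Fset' F := by
  obtain ⟨u, ⟨N, hN⟩, hu⟩ := hp
  refine ⟨fun n => Nat.casesOn n j u, ⟨N + 1, fun n hn => ?_⟩, ?_⟩
  · cases n with
    | zero => omega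
    | succ n => exact hN n (by omega)
  · exact codes_cons hF (u := fun n => Nat.casesOn n j u) hu

lemma Fset'_dense (hF : IsAttractor phiF F) : F ⊆ closure (Fset' F) := by
  have key : ∀ n : ℕ, ∀ z ∈ F, ∃ p ∈ Fset' F, dist z p ≤ 2 * (1 / 3) ^ n := by
    intro n
    induction n with
    | zero =>
      intro z hz
      refine ⟨0, zero_mem_Fset' hF, ?_⟩
      obtain ⟨h1, h2, h3, h4⟩ := F_box hF hz
      have := Complex.norm_le_abs_re_add_abs_im z
      rw [abs_of_nonneg h1, abs_of_nonneg h3] at this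
      rw [dist_zero_right, pow_zero]
      linarith
    | succ n ih =>
      intro z hz
      obtain ⟨j, w, hw, rfl⟩ := mem_phi hF hz
      obtain ⟨p, hp, hd⟩ := ih w hw
      refine ⟨phiF j p, phi_mem_Fset' hF j hp, ?_⟩
      rw [dist_phiF, pow_succ]
      linarith
  intro z hz
  rw [Metric.mem_closure_iff]
  intro ε hε
  obtain ⟨n, hn⟩ := exists_pow_lt_of_lt_one (half_pos hε) (by norm_num : (1 / 3 : ℝ) < 1)
  obtain ⟨p, hp, hd⟩ := key n z hz
  exact ⟨p, hp, by linarith⟩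

end

/-- `F' = π_F(Ω)` is a countable dense subset of `F`, and every point
of `F'` has a unique coding: if `u ∈ Ω` and `π_F(v) = π_F(u)`, then `v = u`. -/
theorem stmt3 (F : Set ℂ) (hF : IsAttractor phiF F) :
    (Fset' F).Countable ∧ Fset' F ⊆ F ∧ F ⊆ closure (Fset' F) ∧
    (∀ u ∈ OmegaSeq, ∀ v : ℕ → Letter, ∀ q : ℂ,
      codes phiF F u q → codes phiF F v q → v = u) := by
  refine ⟨triadic_countable.mono ?_, ?_, Fset'_dense hF, ?_⟩
  · rintro q ⟨u, hu, h⟩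
    exact omega_triadic hF hu h
  · rintro q ⟨u, -, h⟩
    exact codes_mem h
  · intro u hu v q h h'
    exact coding_unique hF (omega_triadic hF hu h) h h'
end

section
/- Every u ∈ Ω admits exactly one factorization u = U₁U₂⋯ into consecutive finite nonempty words such that each U_j is an F-segment of u occupying the corresponding positions (the F-segment decomposition of u). -/
/-! The first letter of an `F`-special segment is `3` or `4` and all its other letters are `2` or
`5`, so two special segments with a common position start at the same place. The length of a
special segment is then determined by its start: `35` has length `2`, and for `42^m5…` the first
`5` and the letter after it decide. Hence distinct special segments are disjoint
(`FSpecial.eq_of_mem`), and every position lies in exactly one `F`-segment.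

Uniqueness of the decomposition follows because the segment starting at a given position has a
unique length. For existence, segments are cut off greedily; the invariant is that the current
position is interior to no special segment (`IsCut`), which guarantees that it starts a segment
and is preserved by passing to the end of that segment. -/


open MeasureTheory

/-- A special segment in terms of the offset `e` of its first `5`: either `42^(e-1)5`, extended by
the next letter exactly when that letter is `5`, or `35`. -/
lemma FSpecial.shape {u : ℕ → Letter} {j L : ℕ} (h : FSpecial u j L) :
    (∃ e, 1 ≤ e ∧ u j = l4 ∧ (∀ i, 1 ≤ i → i < e → u (j + i) = l2) ∧ u (j + e) = l5 ∧
      ((L = e + 1 ∧ u (j + e + 1) ≠ l5) ∨ (L = e + 2 ∧ u (j + e + 1) = l5))) ∨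
    (L = 2 ∧ u j = l3 ∧ u (j + 1) = l5) := by
  rcases h with ⟨hL, h4, h2, h5, hn⟩ | ⟨hL, h4, h2, h5, h5'⟩ | h
  · obtain ⟨e, rfl⟩ : ∃ e, L = e + 1 := ⟨L - 1, by omega⟩
    exact Or.inl ⟨e, by omega, h4, h2, h5, Or.inl ⟨rfl, hn⟩⟩
  · obtain ⟨e, rfl⟩ : ∃ e, L = e + 2 := ⟨L - 2, by omega⟩
    exact Or.inl ⟨e, by omega, h4, h2, h5, Or.inr ⟨rfl, h5'⟩⟩
  · exact Or.inr h

lemma FSpecial.two_le {u : ℕ → Letter} {j L : ℕ} (h : FSpecial u j L) : 2 ≤ L := by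
  rcases h with h | h | h <;> omega

lemma FSpecial.head {u : ℕ → Letter} {j L : ℕ} (h : FSpecial u j L) : u j = l3 ∨ u j = l4 := by
  rcases h with h | h | h
  · exact Or.inr h.2.1
  · exact Or.inr h.2.1
  · exact Or.inl h.2.1

lemma FSpecial.tail {u : ℕ → Letter} {j L : ℕ} (h : FSpecial u j L) {k : ℕ}
    (hjk : j < k) (hk : k < j + L) : u k = l2 ∨ u k = l5 := by
  obtain ⟨i, rfl⟩ : ∃ i, k = j + i := ⟨k - j, by omega⟩
  rcases h.shape with ⟨e, he, -, h2, h5, hL⟩ | ⟨rfl, -, h5⟩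
  · rcases lt_trichotomy i e with hi | rfl | hi
    · exact Or.inl (h2 i (by omega) hi)
    · exact Or.inr h5
    · rcases hL with ⟨rfl, -⟩ | ⟨rfl, h5'⟩
      · omega
      · obtain rfl : i = e + 1 := by omega
        exact Or.inr h5'
  · obtain rfl : i = 1 := by omega
    exact Or.inr h5

lemma FSpecial.length_unique {u : ℕ → Letter} {j L M : ℕ} (h : FSpecial u j L)
    (h' : FSpecial u j M) : L = M := by
  have h25 : l2 ≠ l5 := by decide
  have h34 : l3 ≠ l4 := by decide
  rcases h.shape with ⟨e, he, h4, h2, h5, hL⟩ | ⟨rfl, h3, -⟩ <;>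
    rcases h'.shape with ⟨f, hf, h4', h2', h5', hM⟩ | ⟨rfl, h3', -⟩
  · obtain rfl : e = f := by
      rcases lt_trichotomy e f with hlt | heq | hlt
      · exact absurd ((h2' e he hlt).symm.trans h5) h25
      · exact heq
      · exact absurd ((h2 f hf hlt).symm.trans h5') h25
    rcases hL with ⟨rfl, hn⟩ | ⟨rfl, hy⟩ <;> rcases hM with ⟨rfl, hn'⟩ | ⟨rfl, hy'⟩
    · rfl
    · exact absurd hy' hn
    · exact absurd hy hn'
    · rfl
  · exact absurd (h3'.symm.trans h4) h34
  · exact absurd (h3.symm.trans h4') h34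
  · rfl

lemma FSpecial.not_start_inside {u : ℕ → Letter} {p L q M : ℕ} (h : FSpecial u p L)
    (h' : FSpecial u q M) (hpq : p < q) : p + L ≤ q := by
  by_contra! hlt
  rcases h'.head with a | a <;> rcases h.tail hpq hlt with b | b <;>
    exact absurd (a.symm.trans b) (by decide)

/-- Two special segments sharing a position `k` coincide. -/
lemma FSpecial.eq_of_mem {u : ℕ → Letter} {p L q M k : ℕ} (h : FSpecial u p L)
    (h' : FSpecial u q M) (hp : p ≤ k) (hpL : k < p + L) (hq : q ≤ k) (hqM : k < q + M) :
    p = q ∧ L = M := by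
  rcases lt_trichotomy p q with hlt | rfl | hlt
  · have := h.not_start_inside h' hlt
    omega
  · exact ⟨rfl, h.length_unique h'⟩
  · have := h'.not_start_inside h hlt
    omega

lemma FSegment.pos {u : ℕ → Letter} {j L : ℕ} (h : FSegment u j L) : 0 < L := by
  rcases h with h | ⟨rfl, -⟩
  · have := h.two_le
    omega
  · exact Nat.one_pos

lemma FSegment.length_unique {u : ℕ → Letter} {j L M : ℕ} (h : FSegment u j L)
    (h' : FSegment u j M) : L = M := by
  have hpos := h.pos
  have hpos' := h'.pos
  rcases h with h | ⟨rfl, h⟩ <;> rcases h' with h' | ⟨rfl, h'⟩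
  · exact h.length_unique h'
  · exact absurd ⟨le_rfl, by omega⟩ (h' _ _ h)
  · exact absurd ⟨le_rfl, by omega⟩ (h _ _ h')
  · rfl

/-- Position `p` is interior to no special segment: the sequence may be cut just before `p`
without splitting a special segment. -/
def IsCut (u : ℕ → Letter) (p : ℕ) : Prop :=
  ∀ q L, FSpecial u q L → ¬(q < p ∧ p < q + L)

lemma IsCut.exists_segment {u : ℕ → Letter} {p : ℕ} (h : IsCut u p) :
    ∃ L, FSegment u p L := by
  by_cases hp : FPlain u p
  · exact ⟨1, Or.inr ⟨rfl, hp⟩⟩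
  · simp only [FPlain, not_forall, not_not] at hp
    obtain ⟨q, L, hs, hq, hqL⟩ := hp
    have := h q L hs
    obtain rfl : q = p := by omega
    exact ⟨L, Or.inl hs⟩

lemma FSegment.isCut_end {u : ℕ → Letter} {p L : ℕ} (h : FSegment u p L) :
    IsCut u (p + L) := by
  rintro q M hs ⟨hq, hqM⟩
  -- A special segment with `p + L` in its interior also contains the last position `p + L - 1`.
  rcases h with h | ⟨rfl, h⟩
  · have := h.two_le
    have := h.eq_of_mem hs (k := p + L - 1) (by omega) (by omega) (by omega) (by omega)
    omega
  · exact h q M hs ⟨by omega, by omega⟩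

/-- Every `u ∈ Ω` admits exactly one factorization into consecutive
`F`-segments (the `F`-segment decomposition), encoded by the sequence `b` of starting
positions: `b 0 = 0` and each factor on `[b j, b (j+1))` is an `F`-segment of `u`. -/
theorem stmt6 (u : ℕ → Letter) (hu : u ∈ OmegaSeq) :
    ∃! b : ℕ → ℕ, SegDecomp FSegment u b := by
  have hstep : ∀ p : {p // IsCut u p}, ∃ q : {p // IsCut u p}, FSegment u p (q - p) := by
    rintro ⟨p, hp⟩
    obtain ⟨L, hL⟩ := hp.exists_segment
    exact ⟨⟨p + L, hL.isCut_end⟩, by simpa using hL⟩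
  choose next hnext using hstep
  have hzero : IsCut u 0 := fun q L _ h => absurd h.1 (Nat.not_lt_zero q)
  refine ⟨fun n => (next^[n] ⟨0, hzero⟩ : {p // IsCut u p}), ⟨rfl, fun j => ?_⟩, ?_⟩
  · simp only [Function.iterate_succ_apply']
    exact hnext _
  · suffices key : ∀ b c : ℕ → ℕ, SegDecomp FSegment u b → SegDecomp FSegment u c → b = c by
      intro c hc
      refine key _ _ hc ⟨rfl, fun j => ?_⟩
      simp only [Function.iterate_succ_apply']
      exact hnext _
    intro b c hb hc
    funext n
    induction n with
    | zero => rw [hb.1, hc.1]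
    | succ n ih =>
      have h1 := hb.2 n
      have h2 := hc.2 n
      rw [← ih] at h2
      -- Positivity of the lengths rules out truncation in the differences.
      have := h1.pos
      have := h2.pos
      have := h1.length_unique h2
      omega
end
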